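/- Let γ : I → ℝ^{n+1} be a smooth unit-speed curve in M^n(C) (⟨γ(t),γ(t)⟩ = 1/C and ⟨γ'(t),γ'(t)⟩ = 1 for all t ∈ I, I an open interval) and let v : I → ℝ^{n+1} be a smooth vector field along γ tangent to M^n(C), i.e. ⟨v(t),γ(t)⟩ = 0 for all t. Then the following are equivalent: (i) there is a smooth function ω : I → ℝ with v'(t) = ω(t)·γ'(t) − C⟨v(t),γ'(t)⟩·γ(t) and ω'(t) = −C⟨v(t),γ'(t)⟩ for all t ∈ I (i.e. the covariant derivative of v along γ equals ω·γ' with ω' = −C⟨v,γ'⟩); (ii) there exists a constant vector p₀ ∈ ℝ^{n+1} such that v(t) = p₀ − C⟨p₀,γ(t)⟩·γ(t) for all t ∈ I (i.e. v is the restriction to γ of a concircular vector field of M^n(C)). -/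

import Mathlib

/-!
Both directions rest on the decomposition `v = p₀ + ω • γ` with `ω = -C⟨p₀, γ⟩`.

If the differential system holds, `v - ω • γ` has zero derivative, so it is a constant `p₀` on the
connected open set `I`; pairing `p₀ = v - ω • γ` with `γ` and using `⟨v, γ⟩ = 0`, `C⟨γ, γ⟩ = 1`
gives `ω = -C⟨p₀, γ⟩`. Conversely, put `ω = -C⟨p₀, γ⟩`, so that `ω' = -C⟨p₀, γ'⟩`; since
`⟨γ, γ'⟩ = 0` (differentiate `⟨γ, γ⟩ = 1 / C`), `⟨p₀, γ'⟩ = ⟨v, γ'⟩`, and the product rule for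
`v = p₀ + ω • γ` is the required equation.
-/

/-- The bilinear form ⟨x,y⟩ = ε x₁y₁ + x₂y₂ + ⋯ on ℝ^m. -/
noncomputable def form (ε : ℝ) {m : ℕ} [NeZero m] (x y : Fin m → ℝ) : ℝ :=
  (ε - 1) * (x 0 * y 0) + ∑ i, x i * y i

theorem form_comm (ε : ℝ) {m : ℕ} [NeZero m] (x y : Fin m → ℝ) : form ε x y = form ε y x := by
  simp only [form, mul_comm]

theorem form_sub_left (ε : ℝ) {m : ℕ} [NeZero m] (x y z : Fin m → ℝ) :
    form ε (x - y) z = form ε x z - form ε y z := by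
  simp only [form, Pi.sub_apply, sub_mul, Finset.sum_sub_distrib]
  ring

theorem form_smul_left (ε : ℝ) {m : ℕ} [NeZero m] (c : ℝ) (x y : Fin m → ℝ) :
    form ε (c • x) y = c * form ε x y := by
  simp only [form, Pi.smul_apply, smul_eq_mul, mul_add, Finset.mul_sum, mul_assoc]
  ring

theorem hasDerivAt_form {ε : ℝ} {m : ℕ} [NeZero m] {f g : ℝ → Fin m → ℝ} {f' g' : Fin m → ℝ}
    {t : ℝ} (hf : HasDerivAt f f' t) (hg : HasDerivAt g g' t) :
    HasDerivAt (fun s => form ε (f s) (g s))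
      (form ε f' (g t) + form ε (f t) g') t := by
  rw [hasDerivAt_pi] at hf hg
  have h := (((hf 0).fun_mul (hg 0)).const_mul (ε - 1)).fun_add
    (HasDerivAt.fun_sum (u := Finset.univ) fun i _ => (hf i).fun_mul (hg i))
  refine h.congr_deriv ?_
  simp only [form, Finset.sum_add_distrib]
  ring

/-- A curve with constant `⟨γ, γ⟩` on an open set is orthogonal to its velocity. -/
theorem form_deriv_eq_zero {ε c : ℝ} {m : ℕ} [NeZero m] {I : Set ℝ} (hI : IsOpen I)
    {γ : ℝ → Fin m → ℝ} (hγ : ∀ t ∈ I, HasDerivAt γ (deriv γ t) t)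
    (hc : ∀ t ∈ I, form ε (γ t) (γ t) = c) {t : ℝ} (ht : t ∈ I) :
    form ε (γ t) (deriv γ t) = 0 := by
  have h1 := hasDerivAt_form (ε := ε) (hγ t ht) (hγ t ht)
  have h2 : HasDerivAt (fun s => form ε (γ s) (γ s)) 0 t :=
    (hasDerivAt_const t c).congr_of_eventuallyEq
      (Filter.eventuallyEq_of_mem (hI.mem_nhds ht) hc)
  have h3 := h1.unique h2
  rw [form_comm ε (deriv γ t)] at h3
  linarith

/-- A tangent vector field v along a unit-speed curve γ in M^n(C) satisfies
v' = ω·γ' - C⟨v,γ'⟩·γ for some smooth ω with ω' = -C⟨v,γ'⟩ (covariant derivative of v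
along γ equals ω·γ' with ω' = -C⟨v,γ'⟩) if and only if v is the restriction to γ of a
concircular vector field of M^n(C), i.e. v(t) = p₀ - C⟨p₀,γ(t)⟩·γ(t) for a constant p₀. -/
theorem concircular_along_curve_iff_restriction
    (n : ℕ) (hn : 2 ≤ n) (ε R : ℝ) (hε : ε = 1 ∨ ε = -1) (hR : 0 < R)
    (I : Set ℝ) (hIo : IsOpen I) (hIc : IsPreconnected I)
    (γ v : ℝ → Fin (n + 1) → ℝ)
    (hγs : ContDiffOn ℝ (⊤ : ℕ∞) γ I) (hvs : ContDiffOn ℝ (⊤ : ℕ∞) v I)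
    (hγM : ∀ t ∈ I, form ε (γ t) (γ t) = 1 / (ε / R ^ 2))
    (hunit : ∀ t ∈ I, form ε (deriv γ t) (deriv γ t) = 1)
    (htan : ∀ t ∈ I, form ε (v t) (γ t) = 0) :
    (∃ ω : ℝ → ℝ,
      (∀ t ∈ I, HasDerivAt ω (-((ε / R ^ 2) * form ε (v t) (deriv γ t))) t) ∧
      (∀ t ∈ I, deriv v t =
        ω t • deriv γ t - ((ε / R ^ 2) * form ε (v t) (deriv γ t)) • γ t)) ↔
    (∃ p₀ : Fin (n + 1) → ℝ,
      ∀ t ∈ I, v t = p₀ - ((ε / R ^ 2) * form ε p₀ (γ t)) • γ t) := by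
  have hC : ε / R ^ 2 ≠ 0 := by
    rcases hε with rfl | rfl <;> simp [hR.ne']
  generalize ε / R ^ 2 = C at *
  have hγ : ∀ t ∈ I, HasDerivAt γ (deriv γ t) t := fun t ht =>
    ((hγs.differentiableOn (by simp)).differentiableAt (hIo.mem_nhds ht)).hasDerivAt
  have hv : ∀ t ∈ I, HasDerivAt v (deriv v t) t := fun t ht =>
    ((hvs.differentiableOn (by simp)).differentiableAt (hIo.mem_nhds ht)).hasDerivAt
  constructor
  · rintro ⟨ω, hω, hd⟩
    have h0 : ∀ t ∈ I, HasDerivAt (fun s => v s - ω s • γ s) 0 t := by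
      intro t ht
      refine ((hv t ht).fun_sub ((hω t ht).fun_smul (hγ t ht))).congr_deriv ?_
      rw [hd t ht]
      module
    obtain ⟨p₀, hp⟩ := hIo.exists_is_const_of_deriv_eq_zero hIc
      (fun t ht => (h0 t ht).differentiableAt.differentiableWithinAt)
      (fun t ht => (h0 t ht).deriv)
    refine ⟨p₀, fun t ht => ?_⟩
    have hωt : C * form ε p₀ (γ t) = -ω t := by
      rw [← hp t ht, form_sub_left, form_smul_left, htan t ht, hγM t ht]
      field_simp
      ring
    rw [hωt, ← hp t ht]
    module
  · rintro ⟨p₀, hp⟩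
    have hω : ∀ t ∈ I, HasDerivAt (fun s => -(C * form ε p₀ (γ s)))
        (-(C * form ε (v t) (deriv γ t))) t := by
      intro t ht
      refine ((hasDerivAt_form (hasDerivAt_const t p₀) (hγ t ht)).const_mul C).fun_neg.congr_deriv ?_
      rw [hp t ht, form_sub_left, form_smul_left, form_deriv_eq_zero hIo hγ hγM ht]
      simp [form]
    refine ⟨_, hω, fun t ht => ?_⟩
    have h := ((hω t ht).fun_smul (hγ t ht)).const_add p₀
    have h' : v =ᶠ[nhds t] fun s => p₀ + (-(C * form ε p₀ (γ s))) • γ s :=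
      Filter.eventuallyEq_of_mem (hIo.mem_nhds ht) fun s hs => by
        rw [hp s hs]
        module
    rw [(h.congr_of_eventuallyEq h').deriv]
    module
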